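/- arXiv:0704.3645 — 2 statements merged into one kernel-verified Lean document; each statement's English description precedes it below -/
import Mathlib

section
/- Let 1 ∈ A ⊆ B be an inclusion of unital C*-algebras with A simple, and suppose there exists a faithful conditional expectation E : B → A admitting a quasi-basis. Let p be a nonzero projection in A' ∩ B, and set pAp = {p a p : a ∈ A} and pBp = {p b p : b ∈ B}, which are C*-subalgebras of B with unit p. Then there exists a conditional expectation F from pBp onto pAp admitting a quasi-basis; that is, F : pBp → pAp is linear and positive, F(y) = y for all y ∈ pAp, F(y x y') = y F(x) y' for all y, y' ∈ pAp and x ∈ pBp, and there exist w_1, …, w_m ∈ pBp such that x = Σ_{j=1}^m w_j F(w_j^* x) = Σ_{j=1}^m F(x w_j) w_j^* for all x ∈ pBp. -/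
/-!
A quasi-basis yields a Pimsner–Popa inequality `x⋆ x ≤ c E(x⋆ x)`, so `p ≤ c E(p)`, and `E(p)` is
central in `A`. Cutting off the spectrum of `E(p)` below `1 / c` gives a central invertible
`d = k² ∈ A` with `d p = E(p) p`. The map `E' = k⁻¹ E(·) k⁻¹` is a positive `A`-bimodule map with
quasi-basis `u_j k` and `E'(p) p = p`; hence `F = E'(·) p` is a conditional expectation from `pBp`
onto `pAp = Ap`.

The map `x ↦ p x p` is an idempotent on the right `A`-module `B`, but since `E'` is not tracial it
need not be self-adjoint for `⟨x, y⟩ = E'(x⋆ y)`, so `p u_j k p` need not be a quasi-basis of `F`.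
In coordinates the map is an idempotent matrix `t` over `A`; replacing `t` by the projection `q`
with the same range, `w_j = ∑ i, u_i k q_ij` is a quasi-basis.
-/

open Set Matrix

/-- `E` restricts to a conditional expectation from the algebra `D` onto its subalgebra `C`. Both
are given as sets and `E` is defined on all of `B`, so that corners `p B p`, whose unit is not
that of `B`, are covered; the values of `E` outside `D` are irrelevant. -/
structure IsConditionalExpectation {B : Type*} [CStarAlgebra B] [PartialOrder B]
    (E : B →ₗ[ℂ] B) (C D : Set B) : Prop where
  apply_mem : ∀ x ∈ D, E x ∈ C
  apply_of_mem : ∀ y ∈ C, E y = y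
  map_mul_mul : ∀ y ∈ C, ∀ y' ∈ C, ∀ x ∈ D, E (y * x * y') = y * E x * y'
  map_nonneg : ∀ x ∈ D, 0 ≤ x → 0 ≤ E x

/-- `u` is a finite quasi-basis, in the sense of Watatani, for the restriction of `E` to `D`. -/
structure IsQuasiBasis {B ι : Type*} [CStarAlgebra B] [Fintype ι]
    (E : B →ₗ[ℂ] B) (D : Set B) (u : ι → B) : Prop where
  mem : ∀ j, u j ∈ D
  eq_sum_mul_apply : ∀ x ∈ D, x = ∑ j, u j * E (star (u j) * x)
  eq_sum_apply_mul : ∀ x ∈ D, x = ∑ j, E (x * u j) * star (u j)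

/-- `E` is a positive `A`-bimodule map `B → A`: a conditional expectation without the normalisation
`E 1 = 1`. -/
structure IsPositiveBimoduleMap {B : Type*} [CStarAlgebra B] [PartialOrder B]
    (E : B →ₗ[ℂ] B) (A : StarSubalgebra ℂ B) : Prop where
  apply_mem : ∀ x, E x ∈ A
  map_mul_mul : ∀ a ∈ A, ∀ c ∈ A, ∀ x, E (a * x * c) = a * E x * c
  map_nonneg : ∀ x, 0 ≤ x → 0 ≤ E x

/-- The corner `p S p` cut out of `S` by `p`. -/
def cutdown {B : Type*} [Mul B] (p : B) (S : Set B) : Set B := {z | ∃ b ∈ S, z = p * b * p}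

section Cutdown

variable {B : Type*} {p : B}

theorem cutdown_univ [Mul B] : cutdown p univ = {z | ∃ b, z = p * b * p} := by
  simp only [cutdown, mem_univ, true_and]

theorem mem_cutdown_univ_iff [Semigroup B] (hp : IsIdempotentElem p) {x : B} :
    x ∈ cutdown p univ ↔ p * x = x ∧ x * p = x := by
  refine ⟨?_, fun ⟨left, right⟩ => ⟨x, mem_univ x, by rw [left, right]⟩⟩
  rintro ⟨b, -, rfl⟩
  simp only [mul_assoc, hp.mul_self_mul, hp.eq, and_self]

theorem mem_cutdown_iff_of_commute [Semigroup B] {S : Set B} (hp : IsIdempotentElem p)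
    (hpS : ∀ a ∈ S, Commute p a) {x : B} : x ∈ cutdown p S ↔ ∃ a ∈ S, x = a * p := by
  refine exists_congr fun a => and_congr_right fun ha => ?_
  rw [(hpS a ha).eq, mul_assoc, hp.eq]

end Cutdown

section Projections

variable {M : Type*} [CStarAlgebra M]

/- Kaplansky's formula `q = t t⋆ z⁻¹` with `z = 1 + (t⋆ - t)⋆ (t⋆ - t)`, which commutes with `t`. -/
theorem exists_isStarProjection_of_isIdempotentElem {t : M} (ht : IsIdempotentElem t) :
    ∃ q, IsStarProjection q ∧ q * t = t ∧ t * q = q := by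
  let _ : PartialOrder M := CStarAlgebra.spectralOrder M
  have _ : StarOrderedRing M := CStarAlgebra.spectralOrderedRing M
  set s := star t
  have hs : s * s = s := ht.star.eq
  have hz : IsStrictlyPositive (1 + star (s - t) * (s - t)) :=
    isStrictlyPositive_one.add_nonneg (star_mul_self_nonneg _)
  obtain ⟨z, hz_eq⟩ := hz.isUnit
  have hz_expand : (z : M) = 1 - t - s + t * s + s * t := by
    rw [hz_eq, star_sub, star_star, sub_mul, mul_sub, mul_sub, ht.eq, hs]
    abel
  have mul_z : t * z = t * s * t := by
    rw [hz_expand]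
    simp only [mul_add, mul_sub, mul_one, ← mul_assoc, ht.eq]
    abel
  have z_mul : z * t = t * s * t := by
    rw [hz_expand]
    simp only [add_mul, sub_mul, one_mul, mul_assoc, ht.eq]
    abel
  have star_z : star (z : M) = z := hz_eq ▸ hz.isSelfAdjoint
  have star_z_inv : star (↑z⁻¹ : M) = ↑z⁻¹ := by
    rw [← Units.coe_star, star_inv, show star z = z from Units.ext star_z]
  have t_comm : Commute t (z : M) := mul_z.trans z_mul.symm
  have s_comm : Commute s (z : M) := by simpa only [star_z] using t_comm.star_star
  have ts_comm : Commute (t * s) (↑z⁻¹ : M) := (t_comm.mul_left s_comm).units_inv_right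
  have mul_t : t * s * ↑z⁻¹ * t = t := by
    rw [mul_assoc, ← t_comm.units_inv_right.eq, ← mul_assoc, ← mul_z, Units.mul_inv_cancel_right]
  refine ⟨t * s * ↑z⁻¹, ⟨?_, ?_⟩, mul_t, ?_⟩
  · rw [IsIdempotentElem, ← mul_assoc, ← mul_assoc, mul_t]
  · rw [IsSelfAdjoint, star_mul, star_mul, star_star, star_z_inv, ts_comm.eq]
  · rw [← mul_assoc, ← mul_assoc, ht.eq]

theorem exists_isHermitian_of_isIdempotentElem {ι : Type*} [Fintype ι] {t : Matrix ι ι M}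
    (ht : IsIdempotentElem t) :
    ∃ q : Matrix ι ι M, q.IsHermitian ∧ q * t = t ∧ t * q = q := by
  classical
  let _ : PartialOrder M := CStarAlgebra.spectralOrder M
  have _ : StarOrderedRing M := CStarAlgebra.spectralOrderedRing M
  obtain ⟨q, hq, hqt, htq⟩ :=
    exists_isStarProjection_of_isIdempotentElem (M := CStarMatrix ι ι M) (t := .ofMatrix t) ht
  exact ⟨CStarMatrix.ofMatrix.symm q, hq.isSelfAdjoint, hqt, htq⟩

end Projections

section Order

variable {B : Type*} [CStarAlgebra B] [PartialOrder B] [StarOrderedRing B]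

theorem negPart_mul_eq_zero {m p : B} (hm : IsSelfAdjoint m) (hp : 0 ≤ p)
    (hpm : Commute p m) (hmp : 0 ≤ m * p) : m⁻ * p = 0 := by
  have hp_pos : Commute p m⁺ := (hpm.symm.cfcₙ_real _).symm
  have hp_neg : Commute p m⁻ := (hpm.symm.cfcₙ_real _).symm
  have decomp : m * p = m⁺ * p - m⁻ * p := by rw [← sub_mul, CFC.posPart_sub_negPart m]
  have orth : m⁺ * p * (m⁻ * p) = 0 := by
    rw [mul_assoc, ← mul_assoc p, hp_neg.eq, ← mul_assoc, ← mul_assoc, CFC.posPart_mul_negPart]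
    simp only [zero_mul]
  have unique := CFC.posPart_negPart_unique decomp orth
    (Commute.mul_nonneg (CFC.posPart_nonneg m) hp hp_pos.symm)
    (Commute.mul_nonneg (CFC.negPart_nonneg m) hp hp_neg.symm)
  rw [← unique.2, CFC.negPart_eq_zero_iff _ (.of_nonneg hmp)]
  exact hmp

theorem exists_isStrictlyPositive_mul_eq {A : StarSubalgebra ℂ B} [IsClosed (A : Set B)] {h p : B}
    (hA : h ∈ A) (hsa : IsSelfAdjoint h) (hp : IsStarProjection p) (hph : Commute p h)
    {c : ℝ} (hc : 0 < c) (hle : p ≤ c • h) :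
    ∃ d ∈ A, IsStrictlyPositive d ∧ (∀ b, Commute b h → Commute b d) ∧ d * p = h * p := by
  set m := h - algebraMap ℝ B c⁻¹ with hm
  have m_mem : m ∈ A := sub_mem hA (by
    rw [IsScalarTower.algebraMap_apply ℝ ℂ B]
    exact algebraMap_mem A _)
  have m_sa : IsSelfAdjoint m := hsa.sub (.algebraMap B (.all _))
  have comm_m {b : B} (hb : Commute b h) : Commute b m :=
    hb.sub_right (Algebra.commute_algebraMap_right _ _)
  have mul_p_nonneg : 0 ≤ m * p := by
    have conj := hp.isSelfAdjoint.conjugate_nonneg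
      (sub_nonneg.2 ((inv_smul_le_iff_of_pos hc).2 hle))
    have : p * (h - c⁻¹ • p) * p = m * p := by
      rw [hm, mul_sub, hph.eq, mul_smul_comm, hp.isIdempotentElem.eq, sub_mul, sub_mul, mul_assoc,
        smul_mul_assoc, hp.isIdempotentElem.eq, Algebra.algebraMap_eq_smul_one, smul_one_mul]
    rwa [this] at conj
  have decomp : h + m⁻ = algebraMap ℝ B c⁻¹ + m⁺ := by
    rw [add_comm _ m⁺, ← sub_eq_sub_iff_add_eq_add, ← hm, CFC.posPart_sub_negPart m]
  refine ⟨h + m⁻, add_mem hA (cfcₙ_mem _ m_mem), ?_, fun b hb => ?_, ?_⟩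
  · rw [decomp]
    exact (isStrictlyPositive_algebraMap (inv_pos.2 hc)).add_nonneg (CFC.posPart_nonneg m)
  · exact hb.add_right ((comm_m hb).symm.cfcₙ_real _).symm
  · rw [add_mul, negPart_mul_eq_zero m_sa hp.nonneg (comm_m hph) mul_p_nonneg, add_zero]

theorem exists_units_mul_self_eq {A : StarSubalgebra ℂ B} [IsClosed (A : Set B)] {d : B}
    (hA : d ∈ A) (hd : IsStrictlyPositive d) :
    ∃ k : (↥A)ˣ, IsSelfAdjoint k ∧ (k * k : B) = d ∧ ∀ b, Commute b d → Commute b (k : B) := by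
  have sqrt_mem : CFC.sqrt d ∈ A := by
    rw [CFC.sqrt_eq_real_sqrt d hd.nonneg]
    exact cfcₙ_mem _ hA
  obtain ⟨k, hk⟩ := (A.coe_isUnit (a := ⟨CFC.sqrt d, sqrt_mem⟩)).1 hd.sqrt.isUnit
  have coe_k : (k : B) = CFC.sqrt d := congrArg Subtype.val hk
  refine ⟨k, Units.ext (Subtype.ext ?_), ?_, fun b hb => ?_⟩
  · change star (k : B) = k
    rw [coe_k]
    exact IsSelfAdjoint.of_nonneg (CFC.sqrt_nonneg d)
  · rw [coe_k, CFC.sqrt_mul_sqrt_self d hd.nonneg]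
  · rw [coe_k]
    exact (hb.symm.cfcₙ_nnreal _).symm

theorem star_sum_mul_sum_le {ι : Type*} [Fintype ι] (u : ι → B) :
    ∃ c : ℝ, 0 ≤ c ∧ ∀ b : ι → B,
      star (∑ i, u i * b i) * ∑ i, u i * b i ≤ c • ∑ i, star (b i) * b i := by
  let toMod (f : ι → B) : WithCStarModule B (ι → B) := (WithCStarModule.equiv B (ι → B)).symm f
  refine ⟨‖toMod u‖ ^ 2, sq_nonneg _, fun b => ?_⟩
  have := CStarModule.inner_mul_inner_swap_le (A := B) (x := toMod u) (y := toMod (star b))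
  simpa [toMod, WithCStarModule.pi_inner, WithCStarModule.inner_def] using this

end Order

namespace IsPositiveBimoduleMap

variable {B : Type*} [CStarAlgebra B] [PartialOrder B] {A : StarSubalgebra ℂ B} {E : B →ₗ[ℂ] B}

theorem map_mul_left (hE : IsPositiveBimoduleMap E A) {a : B} (ha : a ∈ A) (x : B) :
    E (a * x) = a * E x := by
  simpa only [mul_one] using hE.map_mul_mul a ha 1 (one_mem A) x

theorem map_mul_right (hE : IsPositiveBimoduleMap E A) {a : B} (ha : a ∈ A) (x : B) :
    E (x * a) = E x * a := by
  simpa only [one_mul] using hE.map_mul_mul 1 (one_mem A) a ha x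

variable [StarOrderedRing B]

theorem monotone (hE : IsPositiveBimoduleMap E A) : Monotone E :=
  (PositiveLinearMap.mk₀ E hE.map_nonneg).monotone'

theorem map_star (hE : IsPositiveBimoduleMap E A) (x : B) : E (star x) = star (E x) :=
  StarHomClass.map_star (PositiveLinearMap.mk₀ E hE.map_nonneg) x

end IsPositiveBimoduleMap

namespace IsConditionalExpectation

variable {B : Type*} [CStarAlgebra B] [PartialOrder B] {A : StarSubalgebra ℂ B} {E : B →ₗ[ℂ] B}

theorem isPositiveBimoduleMap (hE : IsConditionalExpectation E A univ) :
    IsPositiveBimoduleMap E A where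
  apply_mem x := hE.apply_mem x (mem_univ x)
  map_mul_mul a ha c hc x := hE.map_mul_mul a ha c hc x (mem_univ x)
  map_nonneg x := hE.map_nonneg x (mem_univ x)

variable [StarOrderedRing B]

theorem star_apply_mul_apply_le (hE : IsConditionalExpectation E A univ) (x : B) :
    star (E x) * E x ≤ E (star x * x) := by
  have hE' := hE.isPositiveBimoduleMap
  have hx : E x ∈ A := hE'.apply_mem x
  have key : E (star (x - E x) * (x - E x)) = E (star x * x) - star (E x) * E x := by
    simp only [star_sub, sub_mul, mul_sub, map_sub, hE'.map_mul_left (star_mem hx),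
      hE'.map_mul_right hx, hE.apply_of_mem _ hx, hE'.map_star]
    abel
  exact sub_nonneg.1 (key ▸ hE'.map_nonneg _ (star_mul_self_nonneg _))

theorem exists_star_mul_self_le_smul {ι : Type*} [Fintype ι] {u : ι → B}
    (hE : IsConditionalExpectation E A univ) (hu : IsQuasiBasis E univ u) :
    ∃ c : ℝ, 0 < c ∧ ∀ x, star x * x ≤ c • E (star x * x) := by
  have hE' := hE.isPositiveBimoduleMap
  have coeff_le (x : B) (i : ι) :
      star (E (star (u i) * x)) * E (star (u i) * x) ≤ ‖u i‖ ^ 2 • E (star x * x) :=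
    calc star (E (star (u i) * x)) * E (star (u i) * x)
        ≤ E (star (star (u i) * x) * (star (u i) * x)) := hE.star_apply_mul_apply_le _
      _ = E (star x * (u i * star (u i)) * x) := by simp only [star_mul, star_star, mul_assoc]
      _ ≤ E (‖u i * star (u i)‖ • (star x * x)) :=
          hE'.monotone (CStarAlgebra.star_left_conjugate_le_norm_smul (.mul_star_self _))
      _ = ‖u i‖ ^ 2 • E (star x * x) := by
          rw [E.map_smul_of_tower, CStarRing.norm_self_mul_star, sq]
  obtain ⟨c, hc, hle⟩ := star_sum_mul_sum_le u
  refine ⟨c * ∑ i, ‖u i‖ ^ 2 + 1, by positivity, fun x => ?_⟩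
  have nonneg : 0 ≤ E (star x * x) := hE'.map_nonneg _ (star_mul_self_nonneg x)
  calc star x * x
      = star (∑ i, u i * E (star (u i) * x)) * ∑ i, u i * E (star (u i) * x) := by
        rw [← hu.eq_sum_mul_apply x (mem_univ x)]
    _ ≤ c • ∑ i, star (E (star (u i) * x)) * E (star (u i) * x) := hle _
    _ ≤ c • ∑ i, ‖u i‖ ^ 2 • E (star x * x) := by
        gcongr with i; exact coeff_le x i
    _ = (c * ∑ i, ‖u i‖ ^ 2) • E (star x * x) := by rw [← Finset.sum_smul, smul_smul]
    _ ≤ (c * ∑ i, ‖u i‖ ^ 2 + 1) • E (star x * x) := by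
        gcongr; exact le_add_of_nonneg_right zero_le_one

end IsConditionalExpectation

theorem IsQuasiBasis.of_eq_sum_mul_apply {B ι : Type*} [CStarAlgebra B] [Fintype ι]
    {E : B →ₗ[ℂ] B} {D : Set B} {u : ι → B} (map_star : ∀ x, E (star x) = star (E x))
    (star_mem : ∀ x ∈ D, star x ∈ D) (mem : ∀ j, u j ∈ D)
    (eq_sum : ∀ x ∈ D, x = ∑ j, u j * E (star (u j) * x)) : IsQuasiBasis E D u where
  mem := mem
  eq_sum_mul_apply := eq_sum
  eq_sum_apply_mul x hx := by
    have := congrArg star (eq_sum (star x) (star_mem x hx))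
    simpa only [star_star, star_sum, star_mul, ← map_star] using this

namespace IsPositiveBimoduleMap

variable {B ι : Type*} [CStarAlgebra B] [PartialOrder B] [Fintype ι] {A : StarSubalgebra ℂ B}
  {E : B →ₗ[ℂ] B} {p : B}

/-- The coordinates `E (u i⋆ x)` of `x` with respect to a family `u`, as a vector over `A`. -/
noncomputable def coefficients (hE : IsPositiveBimoduleMap E A) (u : ι → B) (x : B) : ι → A :=
  fun i => ⟨E (star (u i) * x), hE.apply_mem _⟩

theorem coefficients_sum_mul (hE : IsPositiveBimoduleMap E A) (u w : ι → B) (c : ι → A) :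
    hE.coefficients u (∑ k, w k * c k) = (of fun i k => hE.coefficients u (w k) i) *ᵥ c := by
  ext i
  simp [coefficients, mulVec, dotProduct, Finset.mul_sum, ← mul_assoc, hE.map_mul_right (c _).2]

theorem coefficients_vecMul (hE : IsPositiveBimoduleMap E A) (u : ι → B) (q : Matrix ι ι A)
    (x : B) :
    hE.coefficients (fun j => ∑ i, u i * q i j) x = qᴴ *ᵥ hE.coefficients u x := by
  ext j
  simp [coefficients, mulVec, dotProduct, Finset.sum_mul, mul_assoc, star_sum,
    hE.map_mul_left (star_mem (q _ _).2)]

theorem exists_frame_of_idempotent [IsClosed (A : Set B)] (hE : IsPositiveBimoduleMap E A)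
    {u : ι → B} (hu : IsQuasiBasis E univ u) {P : B →ₗ[ℂ] B} (hP : IsIdempotentElem P)
    (hPA : ∀ x, ∀ a ∈ A, P (x * a) = P x * a) :
    ∃ v : ι → B, (∀ j, P (v j) = v j) ∧ ∀ x, P x = x → x = ∑ j, v j * E (star (v j) * x) := by
  have expand (x : B) : ∑ i, u i * (hE.coefficients u x i : B) = x :=
    (hu.eq_sum_mul_apply x (mem_univ x)).symm
  have P_sum (c : ι → A) : P (∑ k, u k * c k) = ∑ k, P (u k) * c k := by
    simp only [map_sum, hPA _ _ (c _).2]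
  have PP (x : B) : P (P x) = P x := congr($hP x)
  set t : Matrix ι ι A := of fun i k => hE.coefficients u (P (u k)) i with ht
  have coeff_P (x : B) : hE.coefficients u (P x) = t *ᵥ hE.coefficients u x := by
    rw [← hE.coefficients_sum_mul, ← P_sum, expand]
  have t_idem : IsIdempotentElem t := by
    refine Matrix.ext fun i j => ?_
    have := congrFun (coeff_P (P (u j))) i
    rw [PP] at this
    exact this.symm
  obtain ⟨q, q_herm, qt, tq⟩ := exists_isHermitian_of_isIdempotentElem t_idem
  refine ⟨fun j => ∑ i, u i * q i j, fun j => ?_, fun x hx => ?_⟩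
  · have tq_col : t *ᵥ q.col j = q.col j := congr(($tq).col j)
    have := congrArg (fun c : ι → A => ∑ i, u i * (c i : B))
      (hE.coefficients_sum_mul u (fun k => P (u k)) (q.col j))
    rwa [expand, ← P_sum, ← ht, tq_col] at this
  · have q_coeff : q *ᵥ hE.coefficients u x = hE.coefficients u x := by
      rw [← hx, coeff_P, mulVec_mulVec, qt]
    have coeff_v : hE.coefficients (fun j => ∑ i, u i * q i j) x = hE.coefficients u x := by
      rw [coefficients_vecMul, q_herm.eq, q_coeff]
    calc x = ∑ i, u i * ((q *ᵥ hE.coefficients u x) i : B) := by rw [q_coeff, expand]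
      _ = ∑ j, (∑ i, u i * q i j) * (hE.coefficients u x j : B) := by
        simp only [mulVec, dotProduct, AddSubmonoidClass.coe_finsetSum, MulMemClass.coe_mul,
          Finset.mul_sum, Finset.sum_mul, mul_assoc]
        exact Finset.sum_comm
      _ = ∑ j, (∑ i, u i * q i j) * E (star (∑ i, u i * q i j) * x) := by rw [← coeff_v]; rfl

variable [StarOrderedRing B]

theorem mulLeftRight_comp (hE : IsPositiveBimoduleMap E A) {r : A} (hr : IsSelfAdjoint r)
    (hrA : ∀ a, Commute r a) :
    IsPositiveBimoduleMap (LinearMap.mulLeftRight ℂ ((r : B), (r : B)) ∘ₗ E) A where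
  apply_mem x := by
    simpa using mul_mem (mul_mem r.2 (hE.apply_mem x)) r.2
  map_mul_mul a ha c hc x := by
    have r_a : (r : B) * a = a * r := congrArg Subtype.val (hrA ⟨a, ha⟩).eq
    have r_c : (r : B) * c = c * r := congrArg Subtype.val (hrA ⟨c, hc⟩).eq
    calc r * E (a * x * c) * r = r * a * E x * (c * r) := by
          rw [hE.map_mul_mul a ha c hc]; simp only [mul_assoc]
      _ = a * (r * E x * r) * c := by rw [r_a, ← r_c]; simp only [mul_assoc]
  map_nonneg x hx := by
    simpa using (hr.map A.subtype).conjugate_nonneg (hE.map_nonneg x hx)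

theorem isQuasiBasis_mulLeftRight_comp {u : ι → B} (hE : IsPositiveBimoduleMap E A)
    (hu : IsQuasiBasis E univ u) {k : (↥A)ˣ} (hk : IsSelfAdjoint k)
    (hkA : ∀ a : A, Commute (k : A) a) :
    IsQuasiBasis (LinearMap.mulLeftRight ℂ (((↑k⁻¹ : A) : B), ((↑k⁻¹ : A) : B)) ∘ₗ E) univ
      (fun j => u j * k) := by
  have hE' := hE.mulLeftRight_comp (r := ↑k⁻¹) congr(($(hk.inv) : A))
    fun a => (hkA a).units_inv_left
  refine .of_eq_sum_mul_apply hE'.map_star (fun _ _ => mem_univ _) (fun _ => mem_univ _)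
    fun x hx => (hu.eq_sum_mul_apply x hx).trans (Finset.sum_congr rfl fun j _ => ?_)
  have star_k : star (k : B) = k := congr((($hk : A) : B))
  have k_inv : (k : B) * (↑k⁻¹ : A) = 1 := congrArg Subtype.val k.mul_inv
  have k_comm : (k : B) * E (star (u j) * x) = E (star (u j) * x) * k :=
    congrArg Subtype.val (hkA ⟨_, hE.apply_mem _⟩).eq
  symm
  calc u j * k * ((↑k⁻¹ : A) * E (star (u j * k) * x) * (↑k⁻¹ : A))
      = u j * ((k * (↑k⁻¹ : A)) * (k * E (star (u j) * x)) * (↑k⁻¹ : A)) := by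
        rw [star_mul, star_k, mul_assoc (k : B) (star _), hE.map_mul_left (k : A).2]
        simp only [mul_assoc]
    _ = u j * E (star (u j) * x) := by
        rw [k_inv, one_mul, k_comm, mul_assoc (E _), k_inv, mul_one]

theorem exists_isQuasiBasis_apply_mul_eq_self [IsClosed (A : Set B)] {u : ι → B}
    (hE : IsPositiveBimoduleMap E A) (hu : IsQuasiBasis E univ u) (hp : IsStarProjection p)
    (hpA : ∀ a ∈ A, Commute p a) {c : ℝ} (hc : 0 < c) (hle : p ≤ c • E p) :
    ∃ (E' : B →ₗ[ℂ] B) (v : ι → B), IsPositiveBimoduleMap E' A ∧ IsQuasiBasis E' univ v ∧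
      E' p * p = p := by
  have Ep_comm : ∀ a ∈ A, Commute a (E p) := fun a ha => by
    rw [commute_iff_eq, ← hE.map_mul_left ha, ← hE.map_mul_right ha, (hpA a ha).eq]
  obtain ⟨d, d_mem, d_pos, d_comm, d_mul_p⟩ := exists_isStrictlyPositive_mul_eq (hE.apply_mem p)
    (.of_nonneg (hE.map_nonneg p hp.nonneg)) hp (hpA _ (hE.apply_mem p)) hc hle
  obtain ⟨k, hk, k_mul_k, k_comm⟩ := exists_units_mul_self_eq d_mem d_pos
  have hkA (a : A) : Commute (k : A) a :=
    Subtype.ext (k_comm a (d_comm a (Ep_comm a a.2))).symm.eq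
  refine ⟨_, _, hE.mulLeftRight_comp congr(($(hk.inv) : A)) fun a => (hkA a).units_inv_left,
    hE.isQuasiBasis_mulLeftRight_comp hu hk hkA, ?_⟩
  set r : B := ((↑k⁻¹ : A) : B)
  have r_k : r * k = 1 := congrArg Subtype.val k.inv_mul
  calc r * E p * r * p = r * r * (E p * p) := by
        rw [mul_assoc r, (Ep_comm r (↑k⁻¹ : A).2).symm.eq]; simp only [mul_assoc]
    _ = r * (r * k) * k * p := by rw [← d_mul_p, ← k_mul_k]; simp only [mul_assoc]
    _ = p := by rw [r_k, mul_one, r_k, one_mul]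

theorem isConditionalExpectation_mulRight_comp (hE : IsPositiveBimoduleMap E A)
    (hp : IsStarProjection p) (hpA : ∀ a ∈ A, Commute p a) (hEp : E p * p = p) :
    IsConditionalExpectation (LinearMap.mulRight ℂ p ∘ₗ E) (cutdown p A) (cutdown p univ) where
  apply_mem x _ :=
    (mem_cutdown_iff_of_commute hp.isIdempotentElem hpA).2 ⟨E x, hE.apply_mem x, rfl⟩
  apply_of_mem y hy := by
    obtain ⟨a, ha, rfl⟩ := (mem_cutdown_iff_of_commute hp.isIdempotentElem hpA).1 hy
    simp only [LinearMap.comp_apply, LinearMap.mulRight_apply, hE.map_mul_left ha, mul_assoc, hEp]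
  map_mul_mul y hy y' hy' x hx := by
    obtain ⟨a, ha, rfl⟩ := (mem_cutdown_iff_of_commute hp.isIdempotentElem hpA).1 hy
    obtain ⟨c, hc, rfl⟩ := (mem_cutdown_iff_of_commute hp.isIdempotentElem hpA).1 hy'
    obtain ⟨p_mul_x, x_mul_p⟩ := (mem_cutdown_univ_iff hp.isIdempotentElem).1 hx
    have absorb : a * p * x * (c * p) = a * x * c := by
      rw [mul_assoc a, p_mul_x, ← (hpA c hc).eq, ← mul_assoc, mul_assoc a, x_mul_p]
    calc E (a * p * x * (c * p)) * p = a * (E x * (c * p)) := by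
          rw [absorb, hE.map_mul_mul a ha c hc]; simp only [mul_assoc]
      _ = a * (E x * (p * (c * p))) := by
          rw [← (hpA c hc).eq, hp.isIdempotentElem.mul_self_mul]
      _ = a * p * (E x * p) * (c * p) := by
          rw [mul_assoc a, ← mul_assoc p (E x), (hpA _ (hE.apply_mem x)).eq, mul_assoc (E x),
            hp.isIdempotentElem.eq]
          simp only [mul_assoc]
  map_nonneg x _ hx :=
    (hpA _ (hE.apply_mem x)).symm.mul_nonneg (hE.map_nonneg x hx) hp.nonneg

theorem exists_isQuasiBasis_mulRight_comp [IsClosed (A : Set B)] {u : ι → B}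
    (hE : IsPositiveBimoduleMap E A) (hu : IsQuasiBasis E univ u)
    (hp : IsStarProjection p) (hpA : ∀ a ∈ A, Commute p a) :
    ∃ w : ι → B, IsQuasiBasis (LinearMap.mulRight ℂ p ∘ₗ E) (cutdown p univ) w := by
  obtain ⟨w, hw, eq_sum⟩ := hE.exists_frame_of_idempotent hu
    (P := LinearMap.mulLeftRight ℂ (p, p))
    (LinearMap.ext fun x => by
      simp only [Module.End.mul_apply, LinearMap.mulLeftRight_apply, mul_assoc,
        hp.isIdempotentElem.mul_self_mul, hp.isIdempotentElem.eq])
    fun x a ha => by simp only [LinearMap.mulLeftRight_apply, mul_assoc, (hpA a ha).eq]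
  refine ⟨w, .of_eq_sum_mul_apply (fun x => ?_) ?_ (fun j => ⟨w j, mem_univ _, (hw j).symm⟩) ?_⟩
  · simp only [LinearMap.comp_apply, LinearMap.mulRight_apply, star_mul, hE.map_star,
      hp.isSelfAdjoint.star_eq, (hpA _ (star_mem (hE.apply_mem x))).eq]
  · rintro _ ⟨b, -, rfl⟩
    exact ⟨star b, mem_univ _, by simp only [star_mul, hp.isSelfAdjoint.star_eq, mul_assoc]⟩
  · intro x hx
    obtain ⟨p_mul_x, x_mul_p⟩ := (mem_cutdown_univ_iff hp.isIdempotentElem).1 hx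
    have hPx : LinearMap.mulLeftRight ℂ (p, p) x = x := by
      rw [LinearMap.mulLeftRight_apply, p_mul_x, x_mul_p]
    calc x = (∑ j, w j * E (star (w j) * x)) * p := by rw [← eq_sum x hPx, x_mul_p]
      _ = _ := by
        simp only [Finset.sum_mul, mul_assoc, LinearMap.comp_apply, LinearMap.mulRight_apply]

end IsPositiveBimoduleMap

theorem exists_conditional_expectation_cutdown_general {B ι : Type*} [CStarAlgebra B]
    [PartialOrder B] [StarOrderedRing B] [Fintype ι] {A : StarSubalgebra ℂ B}
    [IsClosed (A : Set B)] {E : B →ₗ[ℂ] B} {u : ι → B} {p : B}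
    (hE : IsConditionalExpectation E A univ) (hu : IsQuasiBasis E univ u)
    (hp : IsStarProjection p) (hpA : ∀ a ∈ A, Commute p a) :
    ∃ (F : B →ₗ[ℂ] B) (w : ι → B), IsConditionalExpectation F (cutdown p A) (cutdown p univ) ∧
      IsQuasiBasis F (cutdown p univ) w := by
  obtain ⟨c, hc, pimsner_popa⟩ := hE.exists_star_mul_self_le_smul hu
  have p_le : p ≤ c • E p := by
    simpa only [hp.isSelfAdjoint.star_eq, hp.isIdempotentElem.eq] using pimsner_popa p
  obtain ⟨E', v, hE', hv, hE'p⟩ :=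
    hE.isPositiveBimoduleMap.exists_isQuasiBasis_apply_mul_eq_self hu hp hpA hc p_le
  obtain ⟨w, hw⟩ := hE'.exists_isQuasiBasis_mulRight_comp hv hp hpA
  exact ⟨_, w, hE'.isConditionalExpectation_mulRight_comp hp hpA hE'p, hw⟩

/-- If `1 ∈ A ⊆ B` is an inclusion of unital C*-algebras of index-finite type with `A`
simple, and `p` is a nonzero projection in the relative commutant `A' ∩ B`, then the
cut-down inclusion `p A p ⊆ p B p` admits a conditional expectation of index-finite type,
i.e., there is a conditional expectation `F` from `p B p` onto `p A p` with a quasi-basis. -/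
theorem exists_conditional_expectation_cutdown
    {B : Type*} [CStarAlgebra B] [PartialOrder B] [StarOrderedRing B]
    (A : StarSubalgebra ℂ B) (hA : IsClosed (A : Set B))
    (hAsimple : ∀ I : Set B, I ⊆ (A : Set B) → IsClosed I → (0 : B) ∈ I →
      (∀ x ∈ I, ∀ y ∈ I, x + y ∈ I) → (∀ x ∈ I, -x ∈ I) →
      (∀ x ∈ I, ∀ a ∈ A, a * x ∈ I) → (∀ x ∈ I, ∀ a ∈ A, x * a ∈ I) →
      I = {0} ∨ I = (A : Set B))
    (E : B →ₗ[ℂ] B)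
    (hrange : ∀ x : B, E x ∈ A)
    (hid : ∀ x ∈ A, E x = x)
    (hbimod : ∀ a ∈ A, ∀ c ∈ A, ∀ x : B, E (a * x * c) = a * E x * c)
    (hpos : ∀ x : B, 0 ≤ x → 0 ≤ E x)
    (hfaithful : ∀ x : B, E (star x * x) = 0 → x = 0)
    (n : ℕ) (u : Fin n → B)
    (hqb₁ : ∀ b : B, b = ∑ j, u j * E (star (u j) * b))
    (hqb₂ : ∀ b : B, b = ∑ j, E (b * u j) * star (u j))
    (p : B) (hpproj : star p = p ∧ p * p = p) (hp0 : p ≠ 0)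
    (hpcomm : ∀ a ∈ A, p * a = a * p) :
    ∃ F : B →ₗ[ℂ] B,
      (∀ x ∈ {z : B | ∃ b : B, z = p * b * p},
        F x ∈ {z : B | ∃ a ∈ A, z = p * a * p}) ∧
      (∀ y ∈ {z : B | ∃ a ∈ A, z = p * a * p}, F y = y) ∧
      (∀ y ∈ {z : B | ∃ a ∈ A, z = p * a * p},
        ∀ y' ∈ {z : B | ∃ a ∈ A, z = p * a * p},
        ∀ x ∈ {z : B | ∃ b : B, z = p * b * p}, F (y * x * y') = y * F x * y') ∧
      (∀ x ∈ {z : B | ∃ b : B, z = p * b * p}, 0 ≤ x → 0 ≤ F x) ∧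
      ∃ (m : ℕ) (w : Fin m → B),
        (∀ j, w j ∈ {z : B | ∃ b : B, z = p * b * p}) ∧
        (∀ x ∈ {z : B | ∃ b : B, z = p * b * p},
          x = ∑ j, w j * F (star (w j) * x)) ∧
        (∀ x ∈ {z : B | ∃ b : B, z = p * b * p},
          x = ∑ j, F (x * w j) * star (w j)) := by
  obtain ⟨F, w, hF, hw⟩ := exists_conditional_expectation_cutdown_general (A := A) (E := E) (u := u)
    ⟨fun x _ => hrange x, hid, fun a ha c hc x _ => hbimod a ha c hc x, fun x _ => hpos x⟩
    ⟨fun _ => mem_univ _, fun b _ => hqb₁ b, fun b _ => hqb₂ b⟩ ⟨hpproj.2, hpproj.1⟩ hpcomm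
  rw [cutdown_univ] at hF hw
  exact ⟨F, hF.apply_mem, hF.apply_of_mem, hF.map_mul_mul, hF.map_nonneg, n, w, hw.mem,
    hw.eq_sum_mul_apply, hw.eq_sum_apply_mul⟩
end

section
/- Let C be a unital C*-algebra, let z be a positive invertible element of the center of C, and let e_1, …, e_N be projections in C satisfying the Jones relations e_k e_{k+1} e_k = z^{-1} e_k, e_{k+1} e_k e_{k+1} = z^{-1} e_{k+1}, and e_k e_l = e_l e_k for |k − l| > 1 (all indices in {1, …, N}). Then for every n ≥ 0 and j ≥ 0 with 2n + j − 1 ≤ N, the element f_n^{(j)} = z^{n(n−1)/2} g_n^{(j)} is a projection: (f_n^{(j)})* = f_n^{(j)} and (f_n^{(j)})² = f_n^{(j)}. -/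
/-- The descending product `e a * e (a - 1) * ⋯ * e b` (equal to `1` when `b > a`). -/
def dProd {C : Type*} [Monoid C] (e : ℕ → C) (a b : ℕ) : C :=
  ((List.range (a + 1 - b)).map fun i => e (a - i)).prod

/-- The ascending product `e a * e (a + 1) * ⋯ * e b` (equal to `1` when `a > b`). -/
def aProd {C : Type*} [Monoid C] (e : ℕ → C) (a b : ℕ) : C :=
  ((List.range (b + 1 - a)).map fun i => e (a + i)).prod

/-- `gElt e n j` is the element
`g_n^{(j)} = (e_{n+j} e_{n+j-1} ⋯ e_{j+1}) (e_{n+j+1} e_{n+j} ⋯ e_{j+2}) ⋯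
(e_{2n+j-1} e_{2n+j-2} ⋯ e_{n+j})`, a product of `n` blocks whose `i`-th block
(`1 ≤ i ≤ n`) is the descending product `e_{n+j+i-1} e_{n+j+i-2} ⋯ e_{j+i}`;
and `g_0^{(j)} = 1`. -/
def gElt {C : Type*} [Monoid C] (e : ℕ → C) (n j : ℕ) : C :=
  ((List.range n).map fun i => dProd e (n + j + i) (j + i + 1)).prod

/-!
Grouping the last factors of the blocks together gives the recursion
`g_{n+1}^{(j)} = D g_n^{(j+2)} A`, where `D = e_{n+j+1} ⋯ e_{j+1}` and
`A = D* = e_{j+1} ⋯ e_{n+j+1}`. Self-adjointness is therefore inherited from `g_n^{(j+2)}`.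
Collapsing `A D` from the inside out gives `A D = w ^ n e_{j+1}` with `w = z⁻¹`, and `e_{j+1}`
commutes with `g_n^{(j+2)}` and is absorbed by `D`, so
`g_n^{(j)} g_n^{(j)} = w ^ (n(n-1)/2) g_n^{(j)}` follows by induction on `n`.
-/

theorem sandwich_mul_self {S : Type*} [Semigroup S] {D h A p r s : S}
    (hrD : Commute r D) (hrh : Commute r h) (hsD : Commute s D) (hph : Commute p h)
    (hAD : A * D = r * p) (hDp : D * p = D) (hhh : h * h = s * h) :
    D * h * A * (D * h * A) = r * s * (D * h * A) := by
  calc D * h * A * (D * h * A)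
      = D * h * (A * D) * (h * A) := by simp only [mul_assoc]
    _ = r * (D * (p * h) * (h * A)) := by
        rw [hAD, ← (hrD.mul_right hrh).left_comm, hph.eq]
        simp only [mul_assoc]
    _ = r * (D * (h * h) * A) := by
        rw [← mul_assoc D, hDp]
        simp only [mul_assoc]
    _ = r * s * (D * h * A) := by
        rw [hhh, ← hsD.left_comm]
        simp only [mul_assoc]

section Monoid

variable {C : Type*} [Monoid C] {e : ℕ → C}

theorem dProd_succ_left {a b : ℕ} (h : b ≤ a + 1) :
    dProd e (a + 1) b = e (a + 1) * dProd e a b := by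
  have hlen : a + 1 + 1 - b = (a + 1 - b) + 1 := by omega
  simp only [dProd, hlen, List.prod_range_succ', Nat.sub_zero, Nat.succ_eq_add_one,
    Nat.add_sub_add_right]

theorem dProd_eq_dProd_succ_mul {a b : ℕ} (h : b ≤ a) :
    dProd e a b = dProd e a (b + 1) * e b := by
  have hlen : a + 1 - b = (a + 1 - (b + 1)) + 1 := by omega
  have hlast : a - (a + 1 - (b + 1)) = b := by omega
  rw [dProd, hlen, List.prod_range_succ, hlast, dProd]

theorem aProd_succ_right {a b : ℕ} (h : a ≤ b + 1) :
    aProd e a (b + 1) = aProd e a b * e (b + 1) := by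
  have hlen : b + 1 + 1 - a = (b + 1 - a) + 1 := by omega
  have hlast : a + (b + 1 - a) = b + 1 := by omega
  rw [aProd, hlen, List.prod_range_succ, hlast, aProd]

theorem aProd_eq_mul_aProd_succ {a b : ℕ} (h : a ≤ b) :
    aProd e a b = e a * aProd e (a + 1) b := by
  have hlen : b + 1 - a = (b + 1 - (a + 1)) + 1 := by omega
  simp only [aProd, hlen, List.prod_range_succ', add_zero, Nat.succ_eq_add_one, Nat.add_assoc,
    Nat.add_comm 1]

theorem commute_dProd {x : C} {a b : ℕ} (h : ∀ k, b ≤ k → k ≤ a → Commute x (e k)) :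
    Commute x (dProd e a b) := by
  refine Commute.list_prod_right _ _ fun y hy => ?_
  obtain ⟨i, hi, rfl⟩ := List.mem_map.mp hy
  rw [List.mem_range] at hi
  exact h _ (by omega) (by omega)

theorem commute_gElt {x : C} {n j : ℕ} (h : ∀ k, j < k → k < 2 * n + j → Commute x (e k)) :
    Commute x (gElt e n j) := by
  refine Commute.list_prod_right _ _ fun y hy => ?_
  obtain ⟨i, hi, rfl⟩ := List.mem_map.mp hy
  rw [List.mem_range] at hi
  exact commute_dProd fun k hk hk' => h k (by omega) (by omega)

theorem dProd_mul_self_right {a b : ℕ} (hab : b ≤ a) (hb : IsIdempotentElem (e b)) :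
    dProd e a b * e b = dProd e a b := by
  rw [dProd_eq_dProd_succ_mul hab, mul_assoc, hb.eq]

theorem aProd_mul_dProd {w : C} {a b : ℕ} (hab : a ≤ b)
    (hidem : IsIdempotentElem (e b))
    (hcomm : ∀ k, a ≤ k → k < b → Commute w (e k))
    (hjones : ∀ k, a ≤ k → k < b → e k * e (k + 1) * e k = w * e k) :
    aProd e a b * dProd e b a = w ^ (b - a) * e a := by
  induction hab using Nat.decreasingInduction with
  | self => simp [aProd, dProd, hidem.eq]
  | of_succ a hab ih =>
    have inner := ih (fun k hk => hcomm k (by omega)) (fun k hk => hjones k (by omega))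
    have hexp : b - a = (b - (a + 1)) + 1 := by omega
    rw [aProd_eq_mul_aProd_succ hab.le, dProd_eq_dProd_succ_mul hab.le, hexp]
    calc e a * aProd e (a + 1) b * (dProd e b (a + 1) * e a)
        = e a * (aProd e (a + 1) b * dProd e b (a + 1)) * e a := by simp only [mul_assoc]
      _ = w ^ (b - (a + 1)) * (e a * e (a + 1) * e a) := by
          rw [inner, ← ((hcomm a le_rfl hab).pow_left _).left_comm]
          simp only [mul_assoc]
      _ = w ^ (b - (a + 1) + 1) * e a := by rw [hjones a le_rfl hab, pow_succ, mul_assoc]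

theorem list_prod_map_range_mul {x y : ℕ → C} {n : ℕ}
    (h : ∀ i k, i < k → k < n → Commute (x k) (y i)) :
    ((List.range n).map fun i => x i * y i).prod
      = ((List.range n).map x).prod * ((List.range n).map y).prod := by
  induction n with
  | zero => simp
  | succ n ih =>
    have hxy : Commute ((List.range n).map y).prod (x n) := by
      refine Commute.list_prod_left _ _ fun c hc => ?_
      obtain ⟨i, hi, rfl⟩ := List.mem_map.mp hc
      exact (h i n (List.mem_range.mp hi) n.lt_succ_self).symm
    rw [List.prod_range_succ, List.prod_range_succ, List.prod_range_succ,
      ih fun i k hik hk => h i k hik (by omega), hxy.mul_mul_mul_comm]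

theorem gElt_succ_eq_dProd_mul {n j : ℕ}
    (hfar : ∀ k l, j < k → k + 1 < l → l < 2 * (n + 1) + j → Commute (e k) (e l)) :
    gElt e (n + 1) j
      = dProd e (n + 1 + j) (j + 1) * (gElt e n (j + 2) * aProd e (j + 2) (n + 1 + j)) := by
  have hblock (i : ℕ) : dProd e (n + 1 + j + (i + 1)) (j + (i + 1) + 1)
      = dProd e (n + (j + 2) + i) (j + 2 + i + 1) * e (j + 2 + i) := by
    rw [← dProd_eq_dProd_succ_mul (by omega)]
    congr 1 <;> omega
  have hlen : n + 1 + j + 1 - (j + 2) = n := by omega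
  rw [gElt, gElt, aProd, hlen, ← list_prod_map_range_mul, List.prod_range_succ']
  · simp only [add_zero, Nat.succ_eq_add_one, hblock]
  · intro i k hik hk
    exact (commute_dProd fun l hl hl' =>
      hfar _ _ (by omega) (by omega) (by omega)).symm

theorem commute_gElt_add_two {n j : ℕ}
    (hfar : ∀ k l, j < k → k + 1 < l → l < 2 * (n + 1) + j → Commute (e k) (e l)) :
    Commute (e (j + 1)) (gElt e n (j + 2)) :=
  commute_gElt fun k hk hk' => hfar _ _ (by omega) (by omega) (by omega)

theorem gElt_succ {n j : ℕ} (hidem : IsIdempotentElem (e (j + 1)))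
    (hfar : ∀ k l, j < k → k + 1 < l → l < 2 * (n + 1) + j → Commute (e k) (e l)) :
    gElt e (n + 1) j
      = dProd e (n + 1 + j) (j + 1) * gElt e n (j + 2) * aProd e (j + 1) (n + 1 + j) := by
  have hle : j + 1 ≤ n + 1 + j := by omega
  calc gElt e (n + 1) j
      = dProd e (n + 1 + j) (j + 1) * e (j + 1)
          * (gElt e n (j + 2) * aProd e (j + 2) (n + 1 + j)) := by
        rw [dProd_mul_self_right hle hidem, gElt_succ_eq_dProd_mul hfar]
    _ = dProd e (n + 1 + j) (j + 1) * gElt e n (j + 2)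
          * (e (j + 1) * aProd e (j + 2) (n + 1 + j)) :=
        (commute_gElt_add_two hfar).mul_mul_mul_comm _ _
    _ = dProd e (n + 1 + j) (j + 1) * gElt e n (j + 2) * aProd e (j + 1) (n + 1 + j) := by
        rw [aProd_eq_mul_aProd_succ hle]

theorem gElt_mul_self {w : C} {n j : ℕ}
    (hidem : ∀ k, j < k → k < 2 * n + j → IsIdempotentElem (e k))
    (hcomm : ∀ k, j < k → k < 2 * n + j → Commute w (e k))
    (hjones : ∀ k, j < k → k + 1 < 2 * n + j → e k * e (k + 1) * e k = w * e k)
    (hfar : ∀ k l, j < k → k + 1 < l → l < 2 * n + j → Commute (e k) (e l)) :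
    gElt e n j * gElt e n j = w ^ (n * (n - 1) / 2) * gElt e n j := by
  induction n generalizing j with
  | zero => simp [gElt]
  | succ n ih =>
    have hle : j + 1 ≤ n + 1 + j := by omega
    have hp : IsIdempotentElem (e (j + 1)) := hidem _ (by omega) (by omega)
    have hAD : aProd e (j + 1) (n + 1 + j) * dProd e (n + 1 + j) (j + 1) = w ^ n * e (j + 1) := by
      rw [aProd_mul_dProd hle (hidem _ (by omega) (by omega))
        (fun k hk hk' => hcomm k (by omega) (by omega))
        (fun k hk hk' => hjones k (by omega) (by omega)),
        show n + 1 + j - (j + 1) = n by omega]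
    have hgg : gElt e n (j + 2) * gElt e n (j + 2)
        = w ^ (n * (n - 1) / 2) * gElt e n (j + 2) :=
      ih (fun k hk hk' => hidem k (by omega) (by omega))
        (fun k hk hk' => hcomm k (by omega) (by omega))
        (fun k hk hk' => hjones k (by omega) (by omega))
        (fun k l hk hkl hl => hfar k l (by omega) hkl (by omega))
    have hwD : Commute w (dProd e (n + 1 + j) (j + 1)) :=
      commute_dProd fun k hk hk' => hcomm k (by omega) (by omega)
    have hwh : Commute w (gElt e n (j + 2)) :=
      commute_gElt fun k hk hk' => hcomm k (by omega) (by omega)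
    rw [gElt_succ hp hfar, Nat.triangle_succ, add_comm _ n, pow_add]
    exact sandwich_mul_self (hwD.pow_left n) (hwh.pow_left n) (hwD.pow_left _)
      (commute_gElt_add_two hfar) hAD (dProd_mul_self_right hle hp) hgg

end Monoid

section StarMul

variable {C : Type*} [Monoid C] [StarMul C] {e : ℕ → C}

theorem star_dProd {a b : ℕ} (h : ∀ k, b ≤ k → k ≤ a → IsSelfAdjoint (e k)) :
    star (dProd e a b) = aProd e b a := by
  rcases lt_or_ge a b with hab | hba
  · simp [dProd, aProd, Nat.sub_eq_zero_of_le hab]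
  induction a, hba using Nat.le_induction with
  | base => simp [dProd, aProd, (h b le_rfl le_rfl).star_eq]
  | succ a hba ih =>
    have hba' : b ≤ a + 1 := hba.trans a.le_succ
    rw [dProd_succ_left hba', star_mul, ih fun k hk hka => h k hk (hka.trans a.le_succ),
      (h (a + 1) hba' le_rfl).star_eq, aProd_succ_right hba']

theorem isSelfAdjoint_gElt {n j : ℕ}
    (hproj : ∀ k, j < k → k < 2 * n + j → IsStarProjection (e k))
    (hfar : ∀ k l, j < k → k + 1 < l → l < 2 * n + j → Commute (e k) (e l)) :
    IsSelfAdjoint (gElt e n j) := by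
  induction n generalizing j with
  | zero => simp [gElt]
  | succ n ih =>
    rw [gElt_succ (hproj _ (by omega) (by omega)).isIdempotentElem hfar,
      ← star_dProd fun k hk hk' => (hproj k (by omega) (by omega)).isSelfAdjoint]
    exact (ih (fun k hk hk' => hproj k (by omega) (by omega))
      (fun k l hk hkl hl => hfar k l (by omega) hkl (by omega))).conjugate _

theorem jones_f_isProjection_general (N : ℕ) (z : C) [Invertible z] (hz : IsSelfAdjoint z)
    (hcomm : ∀ k, 1 ≤ k → k ≤ N → Commute z (e k))
    (hproj : ∀ k, 1 ≤ k → k ≤ N → IsStarProjection (e k))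
    (hjones : ∀ k, 1 ≤ k → k + 1 ≤ N → e k * e (k + 1) * e k = ⅟z * e k)
    (hfar : ∀ k l, 1 ≤ k → k + 1 < l → l ≤ N → Commute (e k) (e l))
    (n j : ℕ) (hrange : 2 * n + j - 1 ≤ N) :
    IsStarProjection (z ^ (n * (n - 1) / 2) * gElt e n j) := by
  have hsa : IsSelfAdjoint (gElt e n j) :=
    isSelfAdjoint_gElt (fun k hk hk' => hproj k (by omega) (by omega))
      (fun k l hk hkl hl => hfar k l (by omega) hkl (by omega))
  have hsq : gElt e n j * gElt e n j = ⅟z ^ (n * (n - 1) / 2) * gElt e n j :=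
    gElt_mul_self (fun k hk hk' => (hproj k (by omega) (by omega)).isIdempotentElem)
      (fun k hk hk' => (hcomm k (by omega) (by omega)).invOf_left)
      (fun k hk hk' => hjones k (by omega) (by omega))
      (fun k l hk hkl hl => hfar k l (by omega) hkl (by omega))
  have hzg : Commute (z ^ (n * (n - 1) / 2)) (gElt e n j) :=
    (commute_gElt fun k hk hk' => hcomm k (by omega) (by omega)).pow_left _
  refine ⟨?_, ((hz.pow _).commute_iff hsa).mp hzg⟩
  rw [IsIdempotentElem, hzg.symm.mul_mul_mul_comm, hsq, mul_assoc, ← invOf_pow,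
    mul_invOf_cancel_left]

end StarMul

/-- In a unital C*-algebra with a positive invertible central element `z` and projections
`e₁, …, e_N` satisfying the Jones relations, for `2n + j - 1 ≤ N` the element
`f_n^{(j)} = z^{n(n-1)/2} g_n^{(j)}` is a projection. -/
theorem jones_f_isProjection
    {C : Type*} [CStarAlgebra C] [PartialOrder C] [StarOrderedRing C]
    (N : ℕ) (z : C) [Invertible z] (hzpos : 0 ≤ z) (hzc : ∀ c : C, z * c = c * z)
    (e : ℕ → C)
    (hproj : ∀ k, 1 ≤ k → k ≤ N → star (e k) = e k ∧ e k * e k = e k)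
    (h1 : ∀ k, 1 ≤ k → k + 1 ≤ N → e k * e (k + 1) * e k = ⅟z * e k)
    (h2 : ∀ k, 1 ≤ k → k + 1 ≤ N → e (k + 1) * e k * e (k + 1) = ⅟z * e (k + 1))
    (h3 : ∀ k l, 1 ≤ k → k ≤ N → 1 ≤ l → l ≤ N → (k + 1 < l ∨ l + 1 < k) →
      e k * e l = e l * e k)
    (n j : ℕ) (hrange : 2 * n + j - 1 ≤ N) :
    star (z ^ (n * (n - 1) / 2) * gElt e n j) = z ^ (n * (n - 1) / 2) * gElt e n j ∧
    (z ^ (n * (n - 1) / 2) * gElt e n j) * (z ^ (n * (n - 1) / 2) * gElt e n j)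
      = z ^ (n * (n - 1) / 2) * gElt e n j := by
  have hf := jones_f_isProjection_general N z (.of_nonneg hzpos) (fun k _ _ => hzc (e k))
    (fun k hk hkN => ⟨(hproj k hk hkN).2, (hproj k hk hkN).1⟩) h1
    (fun k l hk hkl hl => h3 k l hk (by omega) (by omega) hl (.inl hkl)) n j hrange
  exact ⟨hf.isSelfAdjoint, hf.isIdempotentElem⟩
end
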